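/- Let k ≥ 1 and let M be a k×k matrix all of whose entries are positive integers, satisfying M² = 3M. Then M is one of the following matrices: the 1×1 matrix (3); the 2×2 matrices [[2,1],[2,1]], [[2,2],[1,1]], [[1,1],[2,2]], [[1,2],[1,2]]; or the 3×3 matrix all of whose entries are 1. -/

import Mathlib

/-!
This is the Perron–Frobenius argument. The columns of `M` are strictly positive eigenvectors for the
eigenvalue `3`. Subtracting from one such eigenvector the largest multiple of another that keeps it
nonnegative leaves a nonnegative eigenvector with a zero coordinate, which positivity of `M` forces
to vanish. Hence `M` has rank one, so `M ^ 2 = (tr M) M` and `tr M = 3`. Since the diagonal entries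
are at least `1`, only sizes `1`, `2` and `3` remain, and the vanishing of the `2 × 2` minors
determines the off-diagonal entries up to the ordered factorizations of `2`.
-/

-- The index minimizes `x i / y i`; cross-multiplying avoids division.
theorem exists_forall_mul_le_mul {ι R : Type*} [Finite ι] [Nonempty ι] [CommSemiring R]
    [LinearOrder R] [IsStrictOrderedRing R] (x : ι → R) {y : ι → R} (hy : ∀ i, 0 < y i) :
    ∃ i, ∀ j, x i * y j ≤ x j * y i := by
  let r : ι → ι → Prop := fun i j ↦ x i * y j < x j * y i
  have : Std.Irrefl r := ⟨fun i ↦ lt_irrefl (x i * y i)⟩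
  have : IsTrans ι r := by
    refine ⟨fun i j k (hij : _ < _) (hjk : _ < _) ↦ lt_of_mul_lt_mul_right ?_ (hy j).le⟩
    calc
      x i * y k * y j = x i * y j * y k := by ring
      _ < x j * y i * y k := mul_lt_mul_of_pos_right hij (hy k)
      _ = x j * y k * y i := by ring
      _ < x k * y j * y i := mul_lt_mul_of_pos_right hjk (hy i)
      _ = x k * y i * y j := by ring
  obtain ⟨i, -, hi⟩ :=
    (Finite.wellFounded_of_trans_of_irrefl r).has_min Set.univ Set.univ_nonempty
  exact ⟨i, fun j ↦ not_lt.1 (hi j trivial)⟩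

open scoped Matrix in
theorem eq_zero_of_mulVec_eq_smul_of_apply_eq_zero {ι R : Type*} [Fintype ι] [Semiring R]
    [PartialOrder R] [IsStrictOrderedRing R] {M : Matrix ι ι R} {c : R} (hM : ∀ i j, 0 < M i j)
    {z : ι → R} (hz : ∀ i, 0 ≤ z i) (hMz : M *ᵥ z = c • z) {i : ι} (hi : z i = 0) : z = 0 := by
  have hsum : ∑ j, M i j * z j = 0 := by
    simpa [Matrix.mulVec, dotProduct, hi] using congrFun hMz i
  have hterm := (Finset.sum_eq_zero_iff_of_nonneg fun j _ ↦ mul_nonneg (hM i j).le (hz j)).1 hsum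
  by_contra hne
  obtain ⟨j, hj⟩ := Function.ne_iff.1 hne
  exact (mul_pos (hM i j) ((hz j).lt_of_ne' hj)).ne' (hterm j (Finset.mem_univ j))

section PositiveMatrix

open scoped Matrix

variable {ι R : Type*} [Fintype ι] [CommRing R] [LinearOrder R] [IsStrictOrderedRing R]
  {M : Matrix ι ι R} {c : R}

theorem mul_eq_mul_of_mulVec_eq_smul (hM : ∀ i j, 0 < M i j) {x y : ι → R} (hy : ∀ i, 0 < y i)
    (hMx : M *ᵥ x = c • x) (hMy : M *ᵥ y = c • y) (i j : ι) : x i * y j = x j * y i := by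
  have : Nonempty ι := ⟨i⟩
  obtain ⟨m, hm⟩ := exists_forall_mul_le_mul x hy
  have hz : y m • x - x m • y = 0 := by
    refine eq_zero_of_mulVec_eq_smul_of_apply_eq_zero (c := c) (i := m) hM (fun k ↦ ?_) ?_ ?_
    · simpa [mul_comm] using hm k
    · simp only [Matrix.mulVec_sub, Matrix.mulVec_smul, hMx, hMy, smul_sub, smul_comm c]
    · simp [mul_comm]
  have hratio (k : ι) : y m * x k = x m * y k := sub_eq_zero.1 (congrFun hz k)
  refine mul_left_cancel₀ (hy m).ne' ?_
  linear_combination y j * hratio i - y i * hratio j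

theorem mul_apply_eq_mul_apply_of_mul_self_eq_smul (hM : ∀ i j, 0 < M i j) (hc : M * M = c • M)
    (i j k l : ι) : M i j * M k l = M k j * M i l := by
  have hcol (j : ι) : M *ᵥ M.col j = c • M.col j := funext fun i ↦ congrFun₂ hc i j
  exact mul_eq_mul_of_mulVec_eq_smul hM (fun i ↦ hM i l) (hcol j) (hcol l) i k

end PositiveMatrix

theorem mul_self_eq_trace_smul {ι R : Type*} [Fintype ι] [NonUnitalNonAssocSemiring R]
    {M : Matrix ι ι R} (hM : ∀ i j k l, M i j * M k l = M k j * M i l) : M * M = M.trace • M := by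
  ext i j
  simp only [Matrix.mul_apply, Matrix.trace, Matrix.diag_apply, Matrix.smul_apply, smul_eq_mul,
    Finset.sum_mul]
  exact Finset.sum_congr rfl fun k _ ↦ hM i k k j

theorem trace_eq_of_mul_self_eq_smul {ι R : Type*} [Fintype ι] [Nonempty ι] [CommRing R]
    [LinearOrder R] [IsStrictOrderedRing R] {M : Matrix ι ι R} {c : R}
    (hM : ∀ i j, 0 < M i j) (hc : M * M = c • M) : M.trace = c := by
  have htrace : M.trace • M = c • M :=
    (mul_self_eq_trace_smul (mul_apply_eq_mul_apply_of_mul_self_eq_smul hM hc)).symm.trans hc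
  obtain ⟨i⟩ := ‹Nonempty ι›
  exact mul_right_cancel₀ (hM i i).ne' (congrFun₂ htrace i i)

section OneLe

variable {ι R : Type*} [Fintype ι] [Semiring R] [PartialOrder R] [IsStrictOrderedRing R]
  {M : Matrix ι ι R}

theorem card_le_trace (hM : ∀ i, 1 ≤ M i i) : (Fintype.card ι : R) ≤ M.trace := by
  simpa [Matrix.trace] using Finset.card_nsmul_le_sum Finset.univ (fun i ↦ M i i) 1 fun i _ ↦ hM i

theorem apply_self_eq_one_of_trace_eq_card (hM : ∀ i, 1 ≤ M i i)
    (htrace : M.trace = Fintype.card ι) (i : ι) : M i i = 1 := by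
  have hsum : ∑ _i : ι, (1 : R) = ∑ i, M i i := by
    simpa [Matrix.trace] using htrace.symm
  exact ((Finset.sum_eq_sum_iff_of_le fun i _ ↦ hM i).1 hsum i (Finset.mem_univ i)).symm

theorem apply_eq_one_of_trace_eq_card (hM : ∀ i j, 1 ≤ M i j)
    (hminor : ∀ i j, M i j * M j i = M i i * M j j) (htrace : M.trace = Fintype.card ι)
    (i j : ι) : M i j = 1 := by
  have hdiag := apply_self_eq_one_of_trace_eq_card (fun i ↦ hM i i) htrace
  refine le_antisymm ?_ (hM i j)
  calc
    M i j ≤ M i j * M j i :=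
      le_mul_of_one_le_right (zero_le_one.trans (hM i j)) (hM j i)
    _ = 1 := by rw [hminor, hdiag, hdiag, one_mul]

end OneLe

theorem int_eq_one_two_or_two_one_of_mul_eq_two {a b : ℤ} (ha : 0 < a) (h : a * b = 2) :
    a = 1 ∧ b = 2 ∨ a = 2 ∧ b = 1 := by
  have ha' : a ≤ 2 := Int.le_of_dvd two_pos ⟨b, h.symm⟩
  interval_cases a <;> omega

theorem int_fin_two_cases_of_trace_eq_three_of_det_eq_zero {M : Matrix (Fin 2) (Fin 2) ℤ}
    (hM : ∀ i j, 0 < M i j) (htrace : M.trace = 3) (hdet : M.det = 0) :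
    M = !![2, 1; 2, 1] ∨ M = !![2, 2; 1, 1] ∨ M = !![1, 1; 2, 2] ∨ M = !![1, 2; 1, 2] := by
  rw [Matrix.trace_fin_two] at htrace
  rw [Matrix.det_fin_two] at hdet
  have hdiag : M 0 0 = 1 ∧ M 1 1 = 2 ∨ M 0 0 = 2 ∧ M 1 1 = 1 := by
    have := hM 0 0
    have := hM 1 1
    omega
  have hprod : M 0 1 * M 1 0 = 2 := by
    rcases hdiag with ⟨h₀, h₁⟩ | ⟨h₀, h₁⟩ <;> rw [h₀, h₁] at hdet <;> linarith
  have hoff := int_eq_one_two_or_two_one_of_mul_eq_two (hM 0 1) hprod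
  rw [M.eta_fin_two]
  rcases hdiag with ⟨h₀₀, h₁₁⟩ | ⟨h₀₀, h₁₁⟩ <;> rcases hoff with ⟨h₀₁, h₁₀⟩ | ⟨h₀₁, h₁₀⟩ <;>
    simp [h₀₀, h₀₁, h₁₀, h₁₁]

/-- Any square matrix `M` with positive integer entries satisfying `M² = 3M` is one of
`(3)`, `[[2,1],[2,1]]`, `[[2,2],[1,1]]`, `[[1,1],[2,2]]`, `[[1,2],[1,2]]`, or the `3×3`
all-ones matrix. -/
theorem integer_matrices_sq_eq_three_mul (k : ℕ) (hk : 1 ≤ k)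
    (M : Matrix (Fin k) (Fin k) ℤ)
    (hpos : ∀ i j, 1 ≤ M i j)
    (hM : M * M = (3 : ℤ) • M) :
    (∃ h : k = 1, Matrix.reindex (finCongr h) (finCongr h) M = !![3]) ∨
    (∃ h : k = 2, Matrix.reindex (finCongr h) (finCongr h) M = !![2, 1; 2, 1]) ∨
    (∃ h : k = 2, Matrix.reindex (finCongr h) (finCongr h) M = !![2, 2; 1, 1]) ∨
    (∃ h : k = 2, Matrix.reindex (finCongr h) (finCongr h) M = !![1, 1; 2, 2]) ∨
    (∃ h : k = 2, Matrix.reindex (finCongr h) (finCongr h) M = !![1, 2; 1, 2]) ∨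
    (∃ h : k = 3, Matrix.reindex (finCongr h) (finCongr h) M =
      !![1, 1, 1; 1, 1, 1; 1, 1, 1]) := by
  have : Nonempty (Fin k) := ⟨⟨0, hk⟩⟩
  have hpos' (i j : Fin k) : 0 < M i j := hpos i j
  have hminor := mul_apply_eq_mul_apply_of_mul_self_eq_smul hpos' hM
  have htrace : M.trace = 3 := trace_eq_of_mul_self_eq_smul hpos' hM
  have hk3 : k ≤ 3 := by
    simpa [htrace] using card_le_trace fun i ↦ hpos i i
  interval_cases k
  · refine Or.inl ⟨rfl, ?_⟩
    ext i j
    fin_cases i, j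
    simpa [Matrix.trace] using htrace
  · have hdet : M.det = 0 := by
      rw [Matrix.det_fin_two, hminor 0 0 1 1, mul_comm, sub_self]
    rcases int_fin_two_cases_of_trace_eq_three_of_det_eq_zero hpos' htrace hdet with
      rfl | rfl | rfl | rfl <;> simp
  · have hone := apply_eq_one_of_trace_eq_card hpos
      (fun i j ↦ (hminor i j j i).trans (mul_comm _ _)) (by simpa using htrace)
    iterate 5 right
    refine ⟨rfl, ?_⟩
    ext i j
    fin_cases i <;> fin_cases j <;> simp [hone]
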